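/- Let d ≥ 1 be an integer, α ∈ (0, 1/d), and for λ > 0 let w(λ) be the weight sequence w_n(λ) = 1 + λ/n^{1−α} for n ≥ 1. Then the family (B_{w(λ₁)} × ⋯ × B_{w(λ_d)})_{λ∈(0,∞)^d} admits a common hypercyclic algebra on c₀(ℕ)^d for the coordinatewise product. -/

import Mathlib

open scoped ENNReal ZeroAtInfty
open Finset

noncomputable section

/-- The space `c₀(ℕ)` of complex sequences vanishing at infinity, with the sup norm. -/
abbrev c0C : Type := C₀(ℕ, ℂ)

/-- `T` is the product operator `B_{w(lam 0)} × ⋯ × B_{w(lam (d-1))}` of weighted backward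
shifts, the weight sequence of the `i`-th factor being `(w (lam i) n)_{n ≥ 1}`. -/
def IsProductShiftC0 (d : ℕ) (w : ℝ → ℕ → ℝ)
    (T : (Fin d → c0C) →L[ℂ] (Fin d → c0C)) (lam : Fin d → ℝ) : Prop :=
  ∀ (v : Fin d → c0C) (i : Fin d) (n : ℕ),
    (T v) i n = (w (lam i) (n + 1) : ℂ) * v i (n + 1)

/-- The family `T lam`, `lam ∈ S`, admits a common hypercyclic algebra for the coordinatewise
product: there is a non-unital subalgebra `A ≠ {0}` of `(c₀(ℕ))^d` (closed under addition,
scalar multiplication and the componentwise coordinatewise product) every nonzero element of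
which is a common hypercyclic vector for the family. -/
def CommonHypercyclicAlgebraCWC0 (d : ℕ) (S : Set (Fin d → ℝ))
    (T : (Fin d → ℝ) → ((Fin d → c0C) →L[ℂ] (Fin d → c0C))) : Prop :=
  ∃ A : Set (Fin d → c0C),
    (0 : Fin d → c0C) ∈ A ∧
    (∀ x ∈ A, ∀ y ∈ A, x + y ∈ A) ∧
    (∀ (c : ℂ), ∀ x ∈ A, c • x ∈ A) ∧
    (∀ x ∈ A, ∀ y ∈ A, ∃ z ∈ A, ∀ (i : Fin d) (n : ℕ), z i n = x i n * y i n) ∧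
    (∃ x ∈ A, x ≠ 0) ∧
    (∀ x ∈ A, x ≠ 0 → ∀ lam ∈ S, Dense (Set.range fun n : ℕ => ((T lam) ^ (n + 1)) x))


def shPr (α lam : ℝ) (m N : ℕ) : ℝ :=
  ∏ j ∈ range N, (1 + lam / ((m + j + 1 : ℕ) : ℝ) ^ (1 - α))

lemma shPr_one_le {α lam : ℝ} (hl : 0 ≤ lam) (m N : ℕ) : 1 ≤ shPr α lam m N := by
  unfold shPr
  apply Finset.one_le_prod
  intro j _
  have : 0 ≤ lam / ((m + j + 1 : ℕ) : ℝ) ^ (1 - α) := by positivity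
  linarith

lemma shPr_pos {α lam : ℝ} (hl : 0 ≤ lam) (m N : ℕ) : 0 < shPr α lam m N :=
  lt_of_lt_of_le one_pos (shPr_one_le hl m N)

lemma shPr_mul (α lam : ℝ) (m N : ℕ) :
    shPr α lam 0 m * shPr α lam m N = shPr α lam 0 (m + N) := by
  unfold shPr
  rw [Finset.prod_range_add]
  simp only [zero_add]

lemma one_le_idx_rpow {α : ℝ} (h1 : α < 1) (n : ℕ) : 1 ≤ ((n + 1 : ℕ) : ℝ) ^ (1 - α) := by
  apply Real.one_le_rpow
  · push_cast; linarith [(Nat.cast_nonneg n : (0:ℝ) ≤ n)]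
  · linarith

lemma shPr_le {α lam b : ℝ} (h1 : α < 1) (hl : 0 ≤ lam) (hb : lam ≤ b) (m N : ℕ) :
    shPr α lam m N ≤ (1 + b) ^ N := by
  unfold shPr
  calc _ ≤ ∏ j ∈ range N, (1 + b) := by
        apply Finset.prod_le_prod
        · intro j _; positivity
        · intro j _
          have := div_le_self hl (one_le_idx_rpow h1 (m + j))
          linarith
    _ = _ := by simp

lemma sum_idx_le {α : ℝ} (h0 : 0 < α) (h1 : α < 1) (n : ℕ) :
    ∑ j ∈ range n, 1 / ((j + 1 : ℕ) : ℝ) ^ (1 - α) ≤ (n : ℝ) ^ α / α := by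
  induction n with
  | zero => simp [Real.zero_rpow h0.ne']
  | succ n ih =>
    rw [Finset.sum_range_succ]
    have hn : (0:ℝ) < ((n + 1 : ℕ) : ℝ) := by positivity
    set t : ℝ := ((n + 1 : ℕ) : ℝ) with ht
    have hnt : (n : ℝ) = t * (1 + -(1 / t)) := by
      field_simp; rw [ht]; push_cast; ring
    have ht1 : 1 ≤ t := by rw [ht]; push_cast; linarith [(Nat.cast_nonneg n : (0:ℝ) ≤ n)]
    have hinv : 1 / t ≤ 1 := by rw [div_le_one hn]; exact ht1
    have key := rpow_one_add_le_one_add_mul_self (s := -(1 / t)) (p := α)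
      (by linarith) h0.le h1.le
    have h2 : (n : ℝ) ^ α ≤ t ^ α * (1 + α * -(1 / t)) := by
      rw [hnt, Real.mul_rpow hn.le (by linarith)]
      exact mul_le_mul_of_nonneg_left key (by positivity)
    have h3 : 1 / t ^ (1 - α) = t ^ α * (1 / t) := by
      rw [Real.rpow_sub hn, Real.rpow_one]; field_simp
    rw [h3]
    rw [le_div_iff₀ h0] at ih ⊢
    nlinarith

lemma le_sum_idx {α : ℝ} (h0 : 0 < α) (h1 : α < 1) (n : ℕ) :
    (n : ℝ) ^ α ≤ ∑ j ∈ range n, 1 / ((j + 1 : ℕ) : ℝ) ^ (1 - α) := by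
  rcases Nat.eq_zero_or_pos n with rfl | hn
  · simp [Real.zero_rpow h0.ne']
  have hn' : (0:ℝ) < n := by exact_mod_cast hn
  calc (n : ℝ) ^ α = ∑ j ∈ range n, 1 / (n : ℝ) ^ (1 - α) := by
        simp only [sum_const, card_range, nsmul_eq_mul]
        rw [Real.rpow_sub hn', Real.rpow_one]; field_simp
    _ ≤ _ := by
        apply Finset.sum_le_sum
        intro j hj
        have : j + 1 ≤ n := Finset.mem_range.mp hj
        apply one_div_le_one_div_of_le (by positivity)
        apply Real.rpow_le_rpow (by positivity) (by exact_mod_cast this) (by linarith)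

lemma exp_le_shPr {α a b lam : ℝ} (h0 : 0 < α) (h1 : α < 1) (ha : 0 < a) (hal : a ≤ lam)
    (hlb : lam ≤ b) (n : ℕ) :
    Real.exp (a / (1 + b) * (n : ℝ) ^ α) ≤ shPr α lam 0 n := by
  have hb : 0 < b := by linarith
  calc _ ≤ Real.exp (a / (1 + b) * ∑ j ∈ range n, 1 / ((j + 1 : ℕ) : ℝ) ^ (1 - α)) := by
        apply Real.exp_le_exp.mpr
        exact mul_le_mul_of_nonneg_left (le_sum_idx h0 h1 n) (by positivity)
    _ = ∏ j ∈ range n, Real.exp (a / (1 + b) * (1 / ((j + 1 : ℕ) : ℝ) ^ (1 - α))) := by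
        rw [Finset.mul_sum, Real.exp_sum]
    _ ≤ _ := by
        unfold shPr
        apply Finset.prod_le_prod
        · intro j _; positivity
        intro j _
        simp only [zero_add]
        have hr := one_le_idx_rpow h1 j
        set r : ℝ := ((j + 1 : ℕ) : ℝ) ^ (1 - α)
        have hr0 : 0 < r := by linarith
        set x := lam / r
        have hx0 : 0 < x := by have : 0 < lam := by linarith
                               positivity
        have hxb : x ≤ b := (div_le_self (by linarith) hr).trans hlb
        have e1 : a / (1 + b) * (1 / r) ≤ x / (1 + x) := by
          rw [div_mul_div_comm, mul_one, div_le_div_iff₀ (by positivity) (by positivity)]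
          have : lam = x * r := by simp only [x]; field_simp
          calc a * (1 + x) ≤ lam * (1 + b) := by
                apply mul_le_mul <;> linarith
            _ = _ := by rw [this]; ring
        have e2 := Real.add_one_le_exp (-(x / (1 + x)))
        have e3 : -(x / (1 + x)) + 1 = 1 / (1 + x) := by field_simp; ring
        rw [e3, Real.exp_neg, one_div] at e2
        have e4 := (inv_le_inv₀ (by positivity) (by positivity)).mp e2
        exact (Real.exp_le_exp.mpr e1).trans e4

lemma shPr_compare {α lam mu : ℝ} (h0 : 0 < α) (h1 : α < 1) (hl : 0 ≤ lam) (hm : 0 ≤ mu)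
    (m N : ℕ) :
    shPr α lam m N ≤ Real.exp (|lam - mu| * (((m + N : ℕ) : ℝ) ^ α / α)) * shPr α mu m N := by
  have hs : ∑ j ∈ range N, 1 / ((m + j + 1 : ℕ) : ℝ) ^ (1 - α) ≤ ((m + N : ℕ) : ℝ) ^ α / α := by
    refine le_trans ?_ (sum_idx_le h0 h1 (m + N))
    rw [Finset.sum_range_add]
    have : 0 ≤ ∑ j ∈ range m, 1 / ((j + 1 : ℕ) : ℝ) ^ (1 - α) :=
      Finset.sum_nonneg (fun j _ => by positivity)
    linarith
  calc shPr α lam m N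
      ≤ Real.exp (|lam - mu| * ∑ j ∈ range N, 1 / ((m + j + 1 : ℕ) : ℝ) ^ (1 - α))
        * shPr α mu m N := by
        rw [Finset.mul_sum, Real.exp_sum]
        unfold shPr
        rw [← Finset.prod_mul_distrib]
        apply Finset.prod_le_prod
        · intro j _; positivity
        intro j _
        have hr := one_le_idx_rpow h1 (m + j)
        set r : ℝ := ((m + j + 1 : ℕ) : ℝ) ^ (1 - α)
        have hr0 : 0 < r := by linarith
        have e := Real.add_one_le_exp (|lam - mu| * (1 / r))
        have e0 : 0 ≤ mu / r := by positivity
        have e1 : lam / r ≤ mu / r + |lam - mu| * (1 / r) := by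
          rw [mul_one_div, ← add_div]
          gcongr
          linarith [le_abs_self (lam - mu)]
        have e2 : 0 ≤ |lam - mu| * (1 / r) := by positivity
        nlinarith
    _ ≤ _ := by
        apply mul_le_mul_of_nonneg_right _ (shPr_pos hm m N).le
        apply Real.exp_le_exp.mpr
        exact mul_le_mul_of_nonneg_left hs (abs_nonneg _)

/-- cross-block estimate -/
lemma shPr_cross {α a b lam nu : ℝ} (h0 : 0 < α) (h1 : α < 1) (ha : 0 < a) (hal : a ≤ lam)
    (hlb : lam ≤ b) (han : a ≤ nu) (hnb : nu ≤ b) (g N m' N' : ℕ) (hg : g + N = m' + N') :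
    shPr α lam g N / shPr α nu m' N' ≤
      (1 + b) ^ m' * Real.exp (|lam - nu| * (((m' + N' : ℕ) : ℝ) ^ α / α)
        - a / (1 + b) * (g : ℝ) ^ α) := by
  have hl0 : 0 ≤ lam := by linarith
  have hn0 : 0 ≤ nu := by linarith
  have e1 := shPr_mul α lam g N
  have e2 := shPr_mul α nu m' N'
  have e3 := shPr_compare h0 h1 hl0 hn0 0 (m' + N')
  rw [zero_add] at e3
  rw [hg] at e1
  have e4 := exp_le_shPr h0 h1 ha hal hlb g
  have e5 := shPr_le h1 hn0 hnb 0 m'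
  have p1 := shPr_pos (α := α) hl0 0 g
  have p2 := shPr_pos (α := α) hn0 0 m'
  have p3 := shPr_pos (α := α) hn0 m' N'
  rw [div_le_iff₀ p3, Real.exp_sub]
  set E := Real.exp (|lam - nu| * (((m' + N' : ℕ) : ℝ) ^ α / α))
  set F := Real.exp (a / (1 + b) * (g : ℝ) ^ α)
  have hE : 0 < E := Real.exp_pos _
  have hF : 0 < F := Real.exp_pos _
  rw [show (1 + b) ^ m' * (E / F) * shPr α nu m' N' = ((1+b)^m' * E * shPr α nu m' N') / F by ring]
  rw [le_div_iff₀ hF]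
  have hpos := shPr_pos (α := α) hl0 g N
  calc shPr α lam g N * F ≤ shPr α lam g N * shPr α lam 0 g := by gcongr
    _ = shPr α lam 0 (m' + N') := by rw [mul_comm]; exact e1
    _ ≤ E * (shPr α nu 0 m' * shPr α nu m' N') := by rw [e2]; exact e3
    _ ≤ E * ((1 + b) ^ m' * shPr α nu m' N') := by gcongr
    _ = _ := by ring

lemma shPr_inv_le {α a b nu : ℝ} (h0 : 0 < α) (h1 : α < 1) (ha : 0 < a)
    (han : a ≤ nu) (hnb : nu ≤ b) (m' N' : ℕ) :
    1 / shPr α nu m' N' ≤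
      (1 + b) ^ m' * Real.exp (- (a / (1 + b) * ((m' + N' : ℕ) : ℝ) ^ α)) := by
  have := shPr_cross h0 h1 ha han hnb han hnb (m' + N') 0 m' N' (by simp)
  simpa [shPr] using this

lemma grid (d B Q : ℕ) (hB : 1 ≤ B) (hQ : 2 * B ^ d ≤ Q) (S : ℕ) :
    ∃ τ : (Fin d → ℕ) → ℕ, (∀ p, (∀ i, p i < B ^ S) → 2 * τ p ≤ Q ^ S) ∧
      ∀ p p', (∀ i, p i < B ^ S) → (∀ i, p' i < B ^ S) → p ≠ p' →
        ∃ s, s ≤ S ∧ (∀ i, p i ≤ p' i + B ^ (s + 1) ∧ p' i ≤ p i + B ^ (s + 1)) ∧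
          (2 * τ p + Q ^ s ≤ 2 * τ p' ∨ 2 * τ p' + Q ^ s ≤ 2 * τ p) := by
  induction S with
  | zero =>
    refine ⟨fun _ => 0, by simp, ?_⟩
    intro p p' hp hp' hne
    exfalso; apply hne; funext i
    have := hp i; have := hp' i; simp at *; omega
  | succ S ih =>
    obtain ⟨τ, h1, h2⟩ := ih
    have hBS : 0 < B ^ S := by positivity
    let code : (Fin d → ℕ) → ℕ := fun v => (finFunctionFinEquiv
      (fun i => (⟨v i % B, Nat.mod_lt _ hB⟩ : Fin B)) : Fin (B ^ d)).val
    have code_lt : ∀ v, code v + 1 ≤ B ^ d := fun v => Fin.is_lt _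
    have code_inj : ∀ v v', (∀ i, v i < B) → (∀ i, v' i < B) → code v = code v' → v = v' := by
      intro v v' hv hv' h
      have := finFunctionFinEquiv.injective (Fin.ext h)
      funext i
      have := congrArg Fin.val (congrFun this i)
      simpa [Nat.mod_eq_of_lt (hv i), Nat.mod_eq_of_lt (hv' i)] using this
    refine ⟨fun p => code (fun i => p i / B ^ S) * Q ^ S + τ (fun i => p i % B ^ S), ?_, ?_⟩
    · intro p hp
      have e1 := h1 (fun i => p i % B ^ S) (fun i => Nat.mod_lt _ hBS)
      have e2 := code_lt (fun i => p i / B ^ S)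
      calc 2 * (code (fun i => p i / B ^ S) * Q ^ S + τ (fun i => p i % B ^ S))
          ≤ 2 * (code (fun i => p i / B ^ S) + 1) * Q ^ S := by nlinarith
        _ ≤ 2 * B ^ d * Q ^ S := by gcongr
        _ ≤ Q * Q ^ S := by gcongr
        _ = _ := by ring
    · intro p p' hp hp' hne
      have hlt : ∀ p : Fin d → ℕ, (∀ i, p i < B ^ (S + 1)) → ∀ i, p i / B ^ S < B := by
        intro p hp i
        apply Nat.div_lt_of_lt_mul
        have := hp i
        rwa [pow_succ] at this
      have m1 := h1 (fun i => p i % B ^ S) (fun i => Nat.mod_lt _ hBS)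
      have m2 := h1 (fun i => p' i % B ^ S) (fun i => Nat.mod_lt _ hBS)
      by_cases hc : code (fun i => p i / B ^ S) = code (fun i => p' i / B ^ S)
      · have hv := code_inj _ _ (hlt p hp) (hlt p' hp') hc
        have hne' : (fun i => p i % B ^ S) ≠ (fun i => p' i % B ^ S) := by
          intro h
          apply hne; funext i
          have a1 := congrFun hv i
          have a2 := congrFun h i
          rw [← Nat.div_add_mod (p i) (B ^ S), ← Nat.div_add_mod (p' i) (B ^ S), a1, a2]
        obtain ⟨s, hs, hs1, hs2⟩ := h2 _ _ (fun i => Nat.mod_lt _ hBS)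
          (fun i => Nat.mod_lt _ hBS) hne'
        refine ⟨s, by omega, ?_, ?_⟩
        · intro i
          have a1 := congrFun hv i
          have a2 := hs1 i
          rw [← Nat.div_add_mod (p i) (B ^ S), ← Nat.div_add_mod (p' i) (B ^ S), a1]
          omega
        · simp only [hc]
          omega
      · refine ⟨S, by omega, ?_, ?_⟩
        · intro i
          have := hp i; have := hp' i
          omega
        · rcases Nat.lt_or_gt_of_ne hc with h | h
          · left
            have : (code (fun i => p i / B ^ S) + 1) * Q ^ S
              ≤ code (fun i => p' i / B ^ S) * Q ^ S := Nat.mul_le_mul_right _ h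
            nlinarith
          · right
            have : (code (fun i => p' i / B ^ S) + 1) * Q ^ S
              ≤ code (fun i => p i / B ^ S) * Q ^ S := Nat.mul_le_mul_right _ h
            nlinarith

lemma cell_exists {c h lam : ℝ} (hh : 0 < h) (n : ℕ) (hn : 0 < n) (h1 : c ≤ lam)
    (h2 : lam < c + h) : ∃ p : ℕ, p < n ∧ |lam - (c + h * p / n)| ≤ h / n := by
  have hn' : (0:ℝ) < n := by exact_mod_cast hn
  have hx : 0 ≤ (lam - c) * n / h := by
    have : 0 ≤ lam - c := by linarith
    positivity
  refine ⟨⌊(lam - c) * n / h⌋₊, ?_, ?_⟩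
  · rw [Nat.floor_lt hx, div_lt_iff₀ hh]
    nlinarith
  · have e1 := Nat.floor_le hx
    have e2 := Nat.lt_floor_add_one ((lam - c) * n / h)
    set q : ℝ := (⌊(lam - c) * n / h⌋₊ : ℝ)
    rw [le_div_iff₀ hh] at e1
    rw [div_lt_iff₀ hh] at e2
    have : lam - (c + h * q / n) = ((lam - c) * n - q * h) / n := by field_simp; ring
    rw [this, abs_div, abs_of_pos hn', abs_of_nonneg (by linarith)]
    gcongr
    linarith

lemma exists_bound {d : ℕ} (y : Fin d → ℕ → ℂ) (M : ℕ) (hy : ∀ i m, M ≤ m → y i m = 0) :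
    ∃ Y : ℝ, 0 < Y ∧ ∀ i m, ‖y i m‖ ≤ Y := by
  refine ⟨1 + ∑ i, ∑ m ∈ range M, ‖y i m‖, by positivity, ?_⟩
  intro i m
  by_cases hm : m < M
  · have e1 : ‖y i m‖ ≤ ∑ m ∈ range M, ‖y i m‖ :=
      Finset.single_le_sum (f := fun m => ‖y i m‖) (fun _ _ => norm_nonneg _) (Finset.mem_range.mpr hm)
    have e2 : ∑ m ∈ range M, ‖y i m‖ ≤ ∑ i, ∑ m ∈ range M, ‖y i m‖ :=
      Finset.single_le_sum (f := fun i => ∑ m ∈ range M, ‖y i m‖)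
        (fun _ _ => by positivity) (Finset.mem_univ i)
    linarith
  · rw [hy i m (by omega), norm_zero]
    positivity

lemma exists_L {α κ K0 e : ℝ} (h0 : 0 < α) (hκ : 0 < κ) (he : 0 < e) (n : ℕ) :
    ∃ L : ℕ, n ≤ L ∧ K0 * Real.exp (-(κ * ((L : ℝ) / 2) ^ α)) ≤ e := by
  have t1 : Filter.Tendsto (fun L : ℕ => ((L : ℝ) / 2) ^ α) Filter.atTop Filter.atTop :=
    (tendsto_rpow_atTop h0).comp
      (tendsto_natCast_atTop_atTop.atTop_div_const (by norm_num : (0:ℝ) < 2))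
  have t2 := (Real.tendsto_exp_neg_atTop_nhds_zero.comp (t1.const_mul_atTop hκ)).const_mul K0
  rw [mul_zero] at t2
  have := (t2.eventually (gt_mem_nhds he)).and (Filter.eventually_ge_atTop n)
  obtain ⟨L, h1, h2⟩ := this.exists
  exact ⟨L, h2, h1.le⟩

lemma exists_S {α h δ : ℝ} (B Q L : ℕ) (hB : 0 < B)
    (hQB : (Q : ℝ) ^ α < B) (hδ : 0 < δ) :
    ∃ S : ℕ, h / (B : ℝ) ^ S * (((3 * L * Q ^ S : ℕ) : ℝ) ^ α / α) ≤ δ := by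
  have hB' : (0:ℝ) < B := by exact_mod_cast hB
  have t : Filter.Tendsto (fun S : ℕ => (h * (3 * L : ℝ) ^ α / α) * ((Q : ℝ) ^ α / B) ^ S)
      Filter.atTop (nhds ((h * (3 * L : ℝ) ^ α / α) * 0)) := by
    apply Filter.Tendsto.const_mul
    apply tendsto_pow_atTop_nhds_zero_of_lt_one (by positivity)
    rwa [div_lt_one hB']
  rw [mul_zero] at t
  obtain ⟨S, hS⟩ := (t.eventually (gt_mem_nhds hδ)).exists
  refine ⟨S, le_of_eq_of_le ?_ hS.le⟩
  push_cast
  rw [Real.mul_rpow (by positivity) (by positivity), ← Real.rpow_natCast (Q : ℝ) S, ← Real.rpow_mul (by positivity),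
    mul_comm (S : ℝ) α, Real.rpow_mul (by positivity), Real.rpow_natCast, div_pow]
  field_simp

lemma expo_bound {α h κ : ℝ} (B Q L S s : ℕ) (hs : s ≤ S) (hB : 0 < B) (hQ : 0 < Q) (h0 : 0 < α)
    (hh0 : 0 < h)
    (hQB : (Q : ℝ) ^ α < B) (hh : 2 * h * B * 6 ^ α / α ≤ κ) (D n g : ℝ) (hD0 : 0 ≤ D)
    (hD : D ≤ 2 * h * B ^ (s + 1) / B ^ S) (hn0 : 0 ≤ n) (hn : n ≤ 3 * L * Q ^ S)
    (hg : L * Q ^ s / 2 ≤ g) :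
    D * (n ^ α / α) ≤ κ * g ^ α := by
  have hB' : (0:ℝ) < B := by exact_mod_cast hB
  have hQ' : (0:ℝ) < Q := by exact_mod_cast hQ
  have hpow : ∀ j : ℕ, ((Q : ℝ) ^ j) ^ α = ((Q : ℝ) ^ α) ^ j := by
    intro j
    rw [← Real.rpow_natCast, ← Real.rpow_mul (by positivity),
      mul_comm (j : ℝ) α, Real.rpow_mul (by positivity), Real.rpow_natCast]
  have hκ : 0 ≤ κ := le_trans (by positivity) hh
  have e1 : n ^ α ≤ (3 * L) ^ α * ((Q : ℝ) ^ α) ^ S := by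
    rw [← hpow, ← Real.mul_rpow (by positivity) (by positivity)]
    exact Real.rpow_le_rpow hn0 hn h0.le
  have e2 : ((L : ℝ) / 2) ^ α * ((Q : ℝ) ^ α) ^ s ≤ g ^ α := by
    rw [← hpow, ← Real.mul_rpow (by positivity) (by positivity)]
    refine Real.rpow_le_rpow (by positivity) (le_trans (le_of_eq (by ring)) hg) h0.le
  have e3 : (3 * L : ℝ) ^ α = 6 ^ α * ((L : ℝ) / 2) ^ α := by
    rw [← Real.mul_rpow (by positivity) (by positivity)]; congr 1; ring
  obtain ⟨j, rfl⟩ := Nat.exists_eq_add_of_le hs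
  set q := (Q : ℝ) ^ α with hq
  have hq0 : 0 < q := by positivity
  calc D * (n ^ α / α) ≤ (2 * h * B ^ (s + 1) / B ^ (s + j)) * ((6 ^ α * ((L : ℝ) / 2) ^ α * q ^ (s + j)) / α) := by
        rw [← e3]; gcongr
    _ = (2 * h * B * 6 ^ α / α) * (((L : ℝ) / 2) ^ α * q ^ s) * (q ^ j / B ^ j) := by
        rw [pow_add, pow_add, pow_add]; field_simp
    _ ≤ κ * (g ^ α) * 1 := by
        have hg0 : 0 ≤ g := le_trans (by positivity) hg
        have e5 : q ^ j / (B : ℝ) ^ j ≤ 1 := by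
          rw [div_le_one (by positivity)]
          gcongr
        gcongr
    _ = _ := by ring

set_option maxHeartbeats 2000000 in
lemma stage (d : ℕ) (α : ℝ) (h0 : 0 < α) (h1 : α < 1) (B Q : ℕ) (hB : 1 ≤ B)
    (hQB : (Q : ℝ) ^ α < B) (hQ : 2 * B ^ d ≤ Q) (a b h : ℝ) (ha : 0 < a) (hab : a ≤ b)
    (hh0 : 0 < h)
    (hh : 2 * h * B * 6 ^ α / α ≤ a / (2 * (1 + b))) (c : Fin d → ℝ)
    (hc : ∀ i, a ≤ c i ∧ c i + h ≤ b) (k : ℕ) (hk : k ≠ 0) (y : Fin d → ℕ → ℂ) (M : ℕ)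
    (hy : ∀ i m, M ≤ m → y i m = 0) (ε η : ℝ) (hε : 0 < ε) (hη : 0 < η) (N0 : ℕ) :
    ∃ (u : Fin d → ℕ → ℂ) (N1 : ℕ), (∀ i n, n < N0 → u i n = 0) ∧
      (∀ i n, N1 ≤ n → u i n = 0) ∧ (∀ i n, ‖u i n‖ ≤ η) ∧
      ∀ lam : Fin d → ℝ, (∀ i, c i ≤ lam i ∧ lam i < c i + h) →
        ∃ N, N0 ≤ N ∧ N ≤ N1 ∧ ∀ i m,
          ‖(shPr α (lam i) m N : ℂ) * u i (m + N) ^ k - y i m‖ ≤ ε := by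
  obtain ⟨Y, hY0, hY⟩ := exists_bound y M hy
  have hb0 : 0 < b := by linarith
  set κ := a / (2 * (1 + b)) with hκ
  have hκ0 : 0 < κ := by positivity
  have hκ2 : a / (1 + b) = 2 * κ := by rw [hκ]; field_simp
  obtain ⟨L, hL1, hL2⟩ := exists_L (K0 := Y * (1 + b) ^ M) (e := min ε (η ^ k)) h0 hκ0
    (lt_min hε (by positivity)) (2 * M + 2 + N0)
  set δ := Real.log (1 + ε / Y) with hδ
  have hδ0 : 0 < δ := Real.log_pos (by have : 0 < ε / Y := by positivity
                                       linarith)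
  have hδe : Y * (Real.exp δ - 1) = ε := by
    rw [hδ, Real.exp_log (by positivity)]; field_simp; ring
  obtain ⟨S, hS⟩ := exists_S (α := α) (h := h) (δ := δ) B Q L hB hQB hδ0
  obtain ⟨τ, hτ1, hτ2⟩ := grid d B Q hB hQ S
  have hBd : 1 ≤ B ^ d := Nat.one_le_pow _ _ hB
  have hQ0 : 0 < Q := by omega
  have hBS : 0 < B ^ S := by positivity
  have hB' : (0:ℝ) < B := by exact_mod_cast hB
  let R : (Fin d → ℕ) → Prop := fun p => ∀ i, p i < B ^ S
  let Np : (Fin d → ℕ) → ℕ := fun p => L * Q ^ S + L * τ p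
  let nu : (Fin d → ℕ) → Fin d → ℝ := fun p i => c i + h * (p i) / ((B ^ S : ℕ) : ℝ)
  have hQS : 0 < Q ^ S := by positivity
  have hNlow : ∀ p, L ≤ Np p := by
    intro p
    have : L ≤ L * Q ^ S := Nat.le_mul_of_pos_right _ hQS
    show L ≤ L * Q ^ S + _
    omega
  have hNup : ∀ p, R p → 2 * Np p ≤ 3 * (L * Q ^ S) := by
    intro p hp
    have := hτ1 p hp
    show 2 * (L * Q ^ S + L * τ p) ≤ _
    nlinarith
  have hLS : L ≤ L * Q ^ S := Nat.le_mul_of_pos_right _ hQS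
  have hnu : ∀ p, R p → ∀ i, a ≤ nu p i ∧ nu p i ≤ b := by
    intro p hp i
    have e1 := hc i
    have e2 : h * (p i) / ((B ^ S : ℕ) : ℝ) ≤ h := by
      rw [div_le_iff₀ (by exact_mod_cast hBS)]
      have : (p i : ℝ) ≤ ((B ^ S : ℕ) : ℝ) := by exact_mod_cast (hp i).le
      gcongr
    have e3 : 0 ≤ h * (p i) / ((B ^ S : ℕ) : ℝ) := by positivity
    constructor
    · show a ≤ c i + _
      linarith
    · show c i + _ ≤ b
      linarith
  -- separation
  have hsep : ∀ p p', R p → R p' → p ≠ p' →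
      ∃ s, s ≤ S ∧ (∀ i, p i ≤ p' i + B ^ (s + 1) ∧ p' i ≤ p i + B ^ (s + 1)) ∧
        (2 * Np p + L * Q ^ s ≤ 2 * Np p' ∨ 2 * Np p' + L * Q ^ s ≤ 2 * Np p) := by
    intro p p' hp hp' hne
    obtain ⟨s, hs, hs1, hs2⟩ := hτ2 p p' hp hp' hne
    refine ⟨s, hs, hs1, ?_⟩
    rcases hs2 with h2 | h2
    · left
      have := Nat.mul_le_mul_left L h2
      show 2 * (L * Q ^ S + L * τ p) + L * Q ^ s ≤ 2 * (L * Q ^ S + L * τ p')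
      nlinarith
    · right
      have := Nat.mul_le_mul_left L h2
      show 2 * (L * Q ^ S + L * τ p') + L * Q ^ s ≤ 2 * (L * Q ^ S + L * τ p)
      nlinarith
  have hdisj : ∀ p p' m m', R p → R p' → m < M → m' < M → Np p + m = Np p' + m' →
      p = p' ∧ m = m' := by
    intro p p' m m' hp hp' hm hm' he
    have hpp : p = p' := by
      by_contra hne
      obtain ⟨s, hs, hs1, hs2⟩ := hsep p p' hp hp' hne
      have : L ≤ L * Q ^ s := Nat.le_mul_of_pos_right _ (by positivity)
      omega
    subst hpp
    exact ⟨rfl, by omega⟩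
  have hex : ∀ i n, ∃ z : ℂ, (∀ p m, R p → m < M → n = Np p + m →
      z ^ k = y i m / (shPr α (nu p i) m (Np p) : ℂ)) ∧
      ((¬ ∃ p m, R p ∧ m < M ∧ n = Np p + m) → z = 0) := by
    intro i n
    by_cases hcase : ∃ p m, R p ∧ m < M ∧ n = Np p + m
    · obtain ⟨p, m, hp, hm, hn⟩ := hcase
      obtain ⟨z, hz⟩ := IsAlgClosed.exists_pow_nat_eq
        (y i m / (shPr α (nu p i) m (Np p) : ℂ)) (Nat.pos_of_ne_zero hk)
      refine ⟨z, ?_, fun h => absurd ⟨p, m, hp, hm, hn⟩ h⟩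
      intro p' m' hp' hm' hn'
      obtain ⟨rfl, rfl⟩ := hdisj p p' m m' hp hp' hm hm' (hn.symm.trans hn')
      exact hz
    · exact ⟨0, fun p m hp hm hn => absurd ⟨p, m, hp, hm, hn⟩ hcase, fun _ => rfl⟩
  choose u hu1 hu2 using hex
  refine ⟨u, 3 * (L * Q ^ S), ?_, ?_, ?_, ?_⟩
  · intro i n hn
    apply hu2
    rintro ⟨p, m, hp, hm, rfl⟩
    have := hNlow p
    omega
  · intro i n hn
    apply hu2
    rintro ⟨p, m, hp, hm, rfl⟩
    have := hNup p hp
    omega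
  · intro i n
    by_cases hcase : ∃ p m, R p ∧ m < M ∧ n = Np p + m
    · obtain ⟨p, m, hp, hm, hn⟩ := hcase
      have hz := hu1 i n p m hp hm hn
      have hnn := hnu p hp i
      have hpos := shPr_pos (α := α) (lam := nu p i) (by linarith) m (Np p)
      refine le_of_pow_le_pow_left₀ hk hη.le ?_
      rw [← norm_pow, hz, norm_div, Complex.norm_real, Real.norm_of_nonneg hpos.le]
      have e1 := shPr_inv_le h0 h1 ha hnn.1 hnn.2 m (Np p)
      have e2 : (L : ℝ) / 2 ≤ ((m + Np p : ℕ) : ℝ) := by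
        have : L ≤ m + Np p := by have := hNlow p
                                  omega
        have : (L : ℝ) ≤ ((m + Np p : ℕ) : ℝ) := by exact_mod_cast this
        have : (0:ℝ) ≤ L := by positivity
        linarith
      have e3 : ((L : ℝ) / 2) ^ α ≤ ((m + Np p : ℕ) : ℝ) ^ α :=
        Real.rpow_le_rpow (by positivity) e2 h0.le
      have e3' : 0 ≤ ((L : ℝ) / 2) ^ α := by positivity
      calc ‖y i m‖ / shPr α (nu p i) m (Np p) = ‖y i m‖ * (1 / shPr α (nu p i) m (Np p)) := by ring
        _ ≤ Y * ((1 + b) ^ m * Real.exp (-(a / (1 + b) * ((m + Np p : ℕ) : ℝ) ^ α))) :=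
            mul_le_mul (hY i m) e1 (by positivity) hY0.le
        _ ≤ Y * ((1 + b) ^ M * Real.exp (-(κ * ((L : ℝ) / 2) ^ α))) := by
            have f1 : (1 + b) ^ m ≤ (1 + b) ^ M := pow_le_pow_right₀ (by linarith) hm.le
            have f2 : Real.exp (-(a / (1 + b) * ((m + Np p : ℕ) : ℝ) ^ α))
                ≤ Real.exp (-(κ * ((L : ℝ) / 2) ^ α)) := by
              apply Real.exp_le_exp.mpr
              rw [hκ2]
              nlinarith
            gcongr
        _ = Y * (1 + b) ^ M * Real.exp (-(κ * ((L : ℝ) / 2) ^ α)) := by ring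
        _ ≤ min ε (η ^ k) := hL2
        _ ≤ η ^ k := min_le_right _ _
    · rw [hu2 i n hcase, norm_zero]; exact hη.le
  · intro lam hlam
    have hcell := fun i => cell_exists hh0 (B ^ S) hBS (hlam i).1 (hlam i).2
    choose p hp hpc using hcell
    have hpR : R p := hp
    have hlab : ∀ i, a ≤ lam i ∧ lam i ≤ b := fun i =>
      ⟨(hc i).1.trans (hlam i).1, (hlam i).2.le.trans (hc i).2⟩
    refine ⟨Np p, ?_, ?_, ?_⟩
    · have := hNlow p
      omega
    · have := hNup p hpR
      omega
    intro i m
    by_cases hcase : ∃ p' m', R p' ∧ m' < M ∧ m + Np p = Np p' + m'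
    · obtain ⟨p', m', hp', hm', hn⟩ := hcase
      rw [hu1 i _ p' m' hp' hm' hn]
      have hnn := hnu p' hp' i
      have hl0 : 0 ≤ lam i := by have := (hlab i).1; linarith
      have hn0 : 0 ≤ nu p' i := by linarith
      have hpos := shPr_pos (α := α) hn0 m' (Np p')
      have hpos2 := shPr_pos (α := α) hl0 m (Np p)
      by_cases hpp : p = p'
      · subst hpp
        obtain rfl : m = m' := by omega
        have hdist : |lam i - nu p i| ≤ h / (B : ℝ) ^ S := by
          have := hpc i
          push_cast at this
          simpa [nu] using this
        have hbd : |lam i - nu p i| * (((m + Np p : ℕ) : ℝ) ^ α / α) ≤ δ := by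
          refine le_trans ?_ hS
          have : m + Np p ≤ 3 * L * Q ^ S := by
            have := hNup p hpR
            rw [mul_assoc]
            omega
          gcongr
        have c1 := shPr_compare h0 h1 hl0 hn0 m (Np p)
        have c2 := shPr_compare h0 h1 hn0 hl0 m (Np p)
        rw [abs_sub_comm] at c2
        set P1 := shPr α (lam i) m (Np p)
        set P2 := shPr α (nu p i) m (Np p)
        have c1' : P1 ≤ Real.exp δ * P2 := c1.trans (by gcongr)
        have c2' : P2 ≤ Real.exp δ * P1 := c2.trans (by gcongr)
        have hE1 : 1 ≤ Real.exp δ := Real.one_le_exp hδ0.le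
        have habs : |P1 / P2 - 1| ≤ Real.exp δ - 1 := by
          have : P1 / P2 - 1 = (P1 - P2) / P2 := by field_simp
          rw [this, abs_div, abs_of_pos hpos, div_le_iff₀ hpos, abs_le]
          constructor
          · by_cases hle : P2 ≤ P1
            · nlinarith
            · push Not at hle
              nlinarith
          · linarith
        have : (P1 : ℂ) * (y i m / (P2 : ℂ)) - y i m = ((P1 / P2 - 1 : ℝ) : ℂ) * y i m := by
          push_cast; ring
        rw [this, norm_mul, Complex.norm_real, Real.norm_eq_abs]
        calc _ ≤ (Real.exp δ - 1) * Y := mul_le_mul habs (hY i m) (norm_nonneg _) (by linarith)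
          _ = ε := by rw [mul_comm]; exact hδe
      · obtain ⟨s, hs, hs1, hs2⟩ := hsep p p' hpR hp' hpp
        have hQs : L ≤ L * Q ^ s := Nat.le_mul_of_pos_right _ (by positivity)
        have hs2' : 2 * Np p + L * Q ^ s ≤ 2 * Np p' := by
          rcases hs2 with h2 | h2
          · exact h2
          · omega
        have hmM : M ≤ m := by omega
        rw [hy i m hmM, sub_zero, norm_mul, norm_div, Complex.norm_real, Complex.norm_real,
          Real.norm_of_nonneg hpos.le, Real.norm_of_nonneg hpos2.le]
        have hcross := shPr_cross h0 h1 ha (hlab i).1 (hlab i).2 hnn.1 hnn.2 m (Np p) m' (Np p')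
          (by omega)
        have hBS1 : (1:ℝ) ≤ (B : ℝ) ^ (s + 1) := one_le_pow₀ (by exact_mod_cast hB)
        have hD : |lam i - nu p' i| ≤ 2 * h * B ^ (s + 1) / B ^ S := by
          have d1 := hpc i
          push_cast at d1
          have d2 : |nu p i - nu p' i| ≤ h * B ^ (s + 1) / B ^ S := by
            have : nu p i - nu p' i = h * ((p i : ℝ) - p' i) / (B : ℝ) ^ S := by
              simp only [nu]; push_cast; ring
            rw [this, abs_div, abs_mul, abs_of_pos hh0, abs_of_pos (show (0:ℝ) < (B : ℝ) ^ S by positivity)]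
            have d3 : (p i : ℝ) ≤ p' i + B ^ (s + 1) := by exact_mod_cast (hs1 i).1
            have d4 : (p' i : ℝ) ≤ p i + B ^ (s + 1) := by exact_mod_cast (hs1 i).2
            gcongr
            rw [abs_le]; constructor <;> linarith
          have d5 : |lam i - nu p i| ≤ h * B ^ (s + 1) / B ^ S := by
            have d6 : |lam i - nu p i| ≤ h / (B : ℝ) ^ S := by simpa [nu] using d1
            refine d6.trans ?_
            gcongr
            nlinarith
          calc _ ≤ |lam i - nu p i| + |nu p i - nu p' i| := abs_sub_le _ _ _
            _ ≤ h * B ^ (s + 1) / B ^ S + h * B ^ (s + 1) / B ^ S := add_le_add d5 d2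
            _ = _ := by ring
        have hg : (L : ℝ) * Q ^ s / 2 ≤ (m : ℝ) := by
          have : L * Q ^ s ≤ 2 * m := by omega
          have : (L : ℝ) * Q ^ s ≤ 2 * m := by exact_mod_cast this
          linarith
        have hn3 : ((m' + Np p' : ℕ) : ℝ) ≤ 3 * L * Q ^ S := by
          have : m' + Np p' ≤ 3 * L * Q ^ S := by
            have := hNup p' hp'
            rw [mul_assoc]
            omega
          exact_mod_cast this
        have hexpo := expo_bound (κ := κ) B Q L S s hs hB hQ0 h0 hh0 hQB hh
          |lam i - nu p' i| ((m' + Np p' : ℕ) : ℝ) (m : ℝ) (abs_nonneg _) hD (by positivity) hn3 hg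
        have e2 : (L : ℝ) / 2 ≤ (m : ℝ) := by
          have : L ≤ 2 * m := by omega
          have : (L : ℝ) ≤ 2 * m := by exact_mod_cast this
          linarith
        have e3 : ((L : ℝ) / 2) ^ α ≤ (m : ℝ) ^ α :=
          Real.rpow_le_rpow (by positivity) e2 h0.le
        calc shPr α (lam i) m (Np p) * (‖y i m'‖ / shPr α (nu p' i) m' (Np p'))
            = ‖y i m'‖ * (shPr α (lam i) m (Np p) / shPr α (nu p' i) m' (Np p')) := by ring
          _ ≤ Y * ((1 + b) ^ m' * Real.exp (|lam i - nu p' i| * (((m' + Np p' : ℕ) : ℝ) ^ α / α)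
                - a / (1 + b) * (m : ℝ) ^ α)) :=
              mul_le_mul (hY i m') hcross (by positivity) hY0.le
          _ ≤ Y * ((1 + b) ^ M * Real.exp (-(κ * ((L : ℝ) / 2) ^ α))) := by
              have f1 : (1 + b) ^ m' ≤ (1 + b) ^ M := pow_le_pow_right₀ (by linarith) hm'.le
              have f2 : Real.exp (|lam i - nu p' i| * (((m' + Np p' : ℕ) : ℝ) ^ α / α)
                - a / (1 + b) * (m : ℝ) ^ α) ≤ Real.exp (-(κ * ((L : ℝ) / 2) ^ α)) := by
                apply Real.exp_le_exp.mpr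
                rw [hκ2]
                nlinarith
              gcongr
          _ = Y * (1 + b) ^ M * Real.exp (-(κ * ((L : ℝ) / 2) ^ α)) := by ring
          _ ≤ min ε (η ^ k) := hL2
          _ ≤ ε := min_le_left _ _
    · rw [hu2 i _ hcase, zero_pow hk, mul_zero, zero_sub, norm_neg]
      have : M ≤ m := by
        by_contra hlt
        exact hcase ⟨p, m, hpR, by omega, by omega⟩
      rw [hy i m this, norm_zero]
      exact hε.le

lemma c0_dist_le {f g : c0C} {C : ℝ} (hC : 0 ≤ C) (h : ∀ m, ‖f m - g m‖ ≤ C) : dist f g ≤ C := by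
  rw [← ZeroAtInftyContinuousMap.dist_toBCF_eq_dist]
  refine (BoundedContinuousFunction.dist_le hC).2 fun m => ?_
  rw [dist_eq_norm]
  exact h m

lemma c0_le_dist (f g : c0C) (m : ℕ) : ‖f m - g m‖ ≤ dist f g := by
  rw [← ZeroAtInftyContinuousMap.dist_toBCF_eq_dist, ← dist_eq_norm]
  exact BoundedContinuousFunction.dist_coe_le_dist (f := f.toBCF) (g := g.toBCF) m

lemma exists_c0 (u : ℕ → ℂ) (N : ℕ) (h : ∀ n, N ≤ n → u n = 0) : ∃ f : c0C, ∀ n, f n = u n := by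
  refine ⟨⟨⟨u, continuous_of_discreteTopology⟩, ?_⟩, fun n => rfl⟩
  rw [cocompact_eq_atTop]
  refine tendsto_const_nhds.congr' ?_
  filter_upwards [Filter.eventually_ge_atTop N] with n hn
  exact (h n hn).symm

lemma c0_small {d : ℕ} (x : Fin d → c0C) {ε : ℝ} (hε : 0 < ε) :
    ∃ n0 : ℕ, ∀ i n, n0 ≤ n → ‖x i n‖ < ε := by
  have : ∀ i, ∀ᶠ n in Filter.atTop, ‖x i n‖ < ε := by
    intro i
    have h := ZeroAtInftyContinuousMapClass.zero_at_infty (x i)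
    rw [cocompact_eq_atTop] at h
    have h2 := h.norm
    rw [norm_zero] at h2
    exact h2.eventually (gt_mem_nhds hε)
  obtain ⟨n0, hn0⟩ := Filter.eventually_atTop.mp (Filter.eventually_all.mpr this)
  exact ⟨n0, fun i n hn => hn0 n hn i⟩

lemma iterate_formula {d : ℕ} {α : ℝ} {T : (Fin d → c0C) →L[ℂ] (Fin d → c0C)} {lam : Fin d → ℝ}
    (hT : IsProductShiftC0 d (fun a n => 1 + a / (n : ℝ) ^ (1 - α)) T lam)
    (v : Fin d → c0C) (N : ℕ) (i : Fin d) (m : ℕ) :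
    ((T ^ N) v) i m = (shPr α (lam i) m N : ℂ) * v i (m + N) := by
  induction N generalizing m with
  | zero => simp [shPr]
  | succ N ih =>
    rw [pow_succ']
    show (T ((T ^ N) v)) i m = _
    rw [hT, ih]
    have : shPr α (lam i) m (N + 1) =
        (1 + lam i / ((m + 1 : ℕ) : ℝ) ^ (1 - α)) * shPr α (lam i) (m + 1) N := by
      unfold shPr
      rw [Finset.prod_range_succ', mul_comm]
      congr 1
      apply Finset.prod_congr rfl
      intro j _
      rw [show m + (j + 1) + 1 = m + 1 + j + 1 by ring]
    rw [this, show m + 1 + N = m + (N + 1) by ring]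
    push_cast
    ring

def goodSet (d : ℕ) (α : ℝ) (V : Set (Fin d → ℝ)) (k n : ℕ) (y : Fin d → ℕ → ℂ) :
    Set (Fin d → c0C) :=
  {x | ∀ lam ∈ V, ∃ N, n ≤ N ∧ ∀ i m,
    ‖(shPr α (lam i) m N : ℂ) * x i (m + N) ^ k - y i m‖ ≤ 1 / ((n : ℝ) + 1)}

lemma good_dense (d : ℕ) (α : ℝ) (h0 : 0 < α) (h1 : α < 1) (B Q : ℕ) (hB : 1 ≤ B)
    (hQB : (Q : ℝ) ^ α < B) (hQ : 2 * B ^ d ≤ Q) (a b h : ℝ) (ha : 0 < a) (hab : a ≤ b)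
    (hh0 : 0 < h)
    (hh : 2 * h * B * 6 ^ α / α ≤ a / (2 * (1 + b))) (c : Fin d → ℝ)
    (hc : ∀ i, a ≤ c i ∧ c i + h ≤ b) (k : ℕ) (hk : k ≠ 0) (n : ℕ) (y : Fin d → ℕ → ℂ) (M : ℕ)
    (hy : ∀ i m, M ≤ m → y i m = 0) :
    Dense (interior (goodSet d α {lam | ∀ i, c i ≤ lam i ∧ lam i < c i + h} k n y)) := by
  rw [Metric.dense_iff]
  intro x0 r hr
  have hb0 : 0 < b := by linarith
  obtain ⟨n0, hn0⟩ := c0_small x0 (show 0 < r / 4 by positivity)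
  set ε : ℝ := 1 / (2 * ((n : ℝ) + 1)) with hε
  have hε0 : 0 < ε := by positivity
  have hε2 : ε + ε = 1 / ((n : ℝ) + 1) := by rw [hε]; field_simp; ring
  obtain ⟨u, N1, hu0, hu1, hu2, hu3⟩ := stage d α h0 h1 B Q hB hQB hQ a b h ha hab hh0 hh c hc
    k hk y M hy ε (r / 4) hε0 (by positivity) (n0 + n)
  have hz := fun i => exists_c0 (fun m => if m < n0 + n then x0 i m else u i m) (n0 + n + N1)
    (fun m hm => by
      rw [if_neg (by omega)]
      exact hu1 i m (by omega))
  choose z hz using hz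
  refine ⟨z, ?_, ?_⟩
  · rw [Metric.mem_ball]
    refine lt_of_le_of_lt ((dist_pi_le_iff (show 0 ≤ r / 2 by positivity)).mpr fun i => ?_)
      (half_lt_self hr)
    refine c0_dist_le (by positivity) fun m => ?_
    rw [hz]
    split_ifs with hm
    · simp only [sub_self, norm_zero]; positivity
    · have e1 := hu2 i m
      have e2 := hn0 i m (by omega)
      have e3 := norm_sub_le (u i m) (x0 i m)
      linarith
  · rw [mem_interior_iff_mem_nhds]
    set R : ℝ := dist z 0 with hR
    have hR0 : 0 ≤ R := dist_nonneg
    have hzR : ∀ i m, ‖z i m‖ ≤ R := by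
      intro i m
      have e1 := c0_le_dist (z i) 0 m
      have e2 : dist (z i) 0 ≤ dist z 0 := dist_le_pi_dist z 0 i
      simp only [ZeroAtInftyContinuousMap.coe_zero, Pi.zero_apply, sub_zero] at e1
      linarith
    have huc : UniformContinuousOn (fun t : ℂ => t ^ k) (Metric.closedBall 0 (R + 1)) :=
      (isCompact_closedBall _ _).uniformContinuousOn_of_continuous (by fun_prop)
    rw [Metric.uniformContinuousOn_iff] at huc
    obtain ⟨δ, hδ0, hδ⟩ := huc (ε / (1 + b) ^ N1) (by positivity)
    refine Filter.mem_of_superset (Metric.ball_mem_nhds z (lt_min hδ0 one_pos)) ?_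
    intro x hx lam hlam
    rw [Metric.mem_ball, lt_min_iff] at hx
    obtain ⟨N, hN0, hN1, hN⟩ := hu3 lam hlam
    refine ⟨N, by omega, fun i m => ?_⟩
    have hzu : z i (m + N) = u i (m + N) := by rw [hz, if_neg (by omega)]
    have hxz : ‖x i (m + N) - z i (m + N)‖ ≤ dist x z :=
      (c0_le_dist (x i) (z i) (m + N)).trans (dist_le_pi_dist x z i)
    have hzn := hzR i (m + N)
    have hxn : ‖x i (m + N)‖ ≤ R + 1 := by
      have := norm_add_le (x i (m + N) - z i (m + N)) (z i (m + N))
      rw [sub_add_cancel] at this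
      linarith [hx.2]
    have hpw := hδ (x i (m + N)) (by simpa using hxn) (z i (m + N)) (by simp; linarith)
      (by rw [dist_eq_norm]; linarith [hx.1])
    rw [dist_eq_norm] at hpw
    have hl0 : 0 ≤ lam i := by linarith [(hlam i).1, (hc i).1]
    have hlb : lam i ≤ b := by linarith [(hlam i).2, (hc i).2]
    have hP0 := shPr_pos (α := α) hl0 m N
    have hP := shPr_le h1 hl0 hlb m N
    have hPN : (1 + b) ^ N ≤ (1 + b) ^ N1 := pow_le_pow_right₀ (by linarith) hN1
    have hfin := hN i m
    rw [← hzu] at hfin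
    rw [← hε2]
    have hdec : (shPr α (lam i) m N : ℂ) * x i (m + N) ^ k - y i m =
      ((shPr α (lam i) m N : ℂ) * z i (m + N) ^ k - y i m) +
        (shPr α (lam i) m N : ℂ) * (x i (m + N) ^ k - z i (m + N) ^ k) := by ring
    rw [hdec]
    refine (norm_add_le _ _).trans (add_le_add hfin ?_)
    rw [norm_mul, Complex.norm_real, Real.norm_of_nonneg hP0.le]
    calc _ ≤ (1 + b) ^ N1 * (ε / (1 + b) ^ N1) :=
          mul_le_mul (hP.trans hPN) hpw.le (norm_nonneg _) (by positivity)
      _ = ε := by field_simp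

lemma exists_BQ (d : ℕ) (hd : 1 ≤ d) (α : ℝ) (h0 : 0 < α) (h1 : α < 1 / (d : ℝ)) :
    ∃ B Q : ℕ, 1 ≤ B ∧ (Q : ℝ) ^ α < B ∧ 2 * B ^ d ≤ Q := by
  have hd' : (0:ℝ) < d := by exact_mod_cast hd
  have hda : 0 < 1 - d * α := by
    rw [lt_div_iff₀ hd'] at h1; linarith
  have t : Filter.Tendsto (fun B : ℕ => (B : ℝ) ^ (1 - d * α)) Filter.atTop Filter.atTop :=
    (tendsto_rpow_atTop hda).comp tendsto_natCast_atTop_atTop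
  obtain ⟨B, hB1, hB2⟩ := ((t.eventually_gt_atTop ((2:ℝ) ^ α)).and
    (Filter.eventually_ge_atTop 1)).exists
  refine ⟨B, 2 * B ^ d, hB2, ?_, le_rfl⟩
  have hB' : (0:ℝ) < B := by exact_mod_cast hB2
  push_cast
  rw [Real.mul_rpow (by positivity) (by positivity), ← Real.rpow_natCast (B : ℝ) d,
    ← Real.rpow_mul hB'.le]
  calc (2:ℝ) ^ α * (B : ℝ) ^ ((d : ℝ) * α) < (B : ℝ) ^ (1 - d * α) * (B : ℝ) ^ ((d : ℝ) * α) := by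
        gcongr
    _ = B := by rw [← Real.rpow_add hB']; simp

lemma exists_nbhd (d : ℕ) (hd : 1 ≤ d) (α : ℝ) (h0 : 0 < α) (h1 : α < 1 / (d : ℝ))
    (l0 : Fin d → ℝ) (hl : ∀ i, 0 < l0 i) :
    ∃ V ∈ nhds l0, ∀ (k n M : ℕ) (y : Fin d → ℕ → ℂ), k ≠ 0 → (∀ i m, M ≤ m → y i m = 0) →
      Dense (interior (goodSet d α V k n y)) := by
  have hd1 : (1:ℝ) ≤ d := by exact_mod_cast hd
  have hα1 : α < 1 := lt_of_lt_of_le h1 (by rw [div_le_one (by linarith)]; exact hd1)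
  obtain ⟨B, Q, hB, hQB, hQ⟩ := exists_BQ d hd α h0 h1
  have hB' : (0:ℝ) < B := by exact_mod_cast hB
  haveI : Nonempty (Fin d) := ⟨⟨0, hd⟩⟩
  obtain ⟨i0, hi0⟩ := Finite.exists_min l0
  obtain ⟨i1, hi1⟩ := Finite.exists_max l0
  set a := l0 i0 / 2 with ha
  set b := l0 i1 + 1 with hb
  have ha0 : 0 < a := by have := hl i0; positivity
  have hb0 : 0 < b := by have := hl i1; positivity
  set h := min (min (l0 i0) 1) (a / (2 * (1 + b)) * α / (2 * B * 6 ^ α)) with hh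
  have hh0 : 0 < h := by
    have := hl i0
    exact lt_min (lt_min this one_pos) (by positivity)
  have hha : h ≤ l0 i0 := (min_le_left _ _).trans (min_le_left _ _)
  have hh1 : h ≤ 1 := (min_le_left _ _).trans (min_le_right _ _)
  have hhc : 2 * h * B * 6 ^ α / α ≤ a / (2 * (1 + b)) := by
    have : h ≤ a / (2 * (1 + b)) * α / (2 * B * 6 ^ α) := min_le_right _ _
    rw [le_div_iff₀ (by positivity)] at this
    rw [div_le_iff₀ h0]
    linarith
  refine ⟨{lam | ∀ i, l0 i - h / 2 ≤ lam i ∧ lam i < l0 i - h / 2 + h}, ?_, ?_⟩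
  · have : Set.pi Set.univ (fun i => Set.Ioo (l0 i - h / 2) (l0 i + h / 2)) ∈ nhds l0 :=
      set_pi_mem_nhds Set.finite_univ fun i _ => Ioo_mem_nhds (by linarith) (by linarith)
    refine Filter.mem_of_superset this fun lam hlam i => ?_
    have := hlam i (Set.mem_univ i)
    exact ⟨this.1.le, by linarith [this.2]⟩
  · intro k n M y hk hy
    refine good_dense d α h0 hα1 B Q hB hQB hQ a b h ha0 ?_ hh0 hhc (fun i => l0 i - h / 2) ?_ k hk
      n y M hy
    · have := hi0 i1; have := hl i0; linarith
    · intro i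
      have := hi0 i; have := hi1 i
      constructor <;> linarith

/-- countable family of finitely supported targets -/
def tgt (d : ℕ) (t : Σ M : ℕ, (Fin d → Fin M → ℕ)) (i : Fin d) (m : ℕ) : ℂ :=
  if hm : m < t.1 then TopologicalSpace.denseSeq ℂ (t.2 i ⟨m, hm⟩) else 0

lemma tgt_zero (d : ℕ) (t : Σ M : ℕ, (Fin d → Fin M → ℕ)) (i : Fin d) (m : ℕ) (hm : t.1 ≤ m) :
    tgt d t i m = 0 := by
  unfold tgt; rw [dif_neg (by omega)]

lemma tgt_approx {d : ℕ} (f : Fin d → c0C) {r : ℝ} (hr : 0 < r) :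
    ∃ t, ∀ i m, ‖tgt d t i m - f i m‖ < r := by
  obtain ⟨M, hM⟩ := c0_small f hr
  have : ∀ (i : Fin d) (m : Fin M), ∃ j : ℕ, ‖TopologicalSpace.denseSeq ℂ j - f i m‖ < r := by
    intro i m
    obtain ⟨j, hj⟩ := (TopologicalSpace.denseRange_denseSeq ℂ).exists_dist_lt (f i m) hr
    refine ⟨j, ?_⟩
    rwa [dist_comm, dist_eq_norm] at hj
  choose z hz using this
  refine ⟨⟨M, z⟩, fun i m => ?_⟩
  unfold tgt
  split_ifs with hm
  · exact hz i ⟨m, hm⟩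
  · rw [zero_sub, norm_neg]
    exact hM i m (by simpa using hm)

lemma exists_common (d : ℕ) (hd : 1 ≤ d) (α : ℝ) (h0 : 0 < α) (h1 : α < 1 / (d : ℝ)) :
    ∃ x : Fin d → c0C, x ≠ 0 ∧ ∀ lam : Fin d → ℝ, (∀ i, 0 < lam i) → ∀ k n : ℕ, k ≠ 0 → ∀ t,
      ∃ N, n ≤ N ∧ ∀ i m,
        ‖(shPr α (lam i) m N : ℂ) * x i (m + N) ^ k - tgt d t i m‖ ≤ 1 / ((n : ℝ) + 1) := by
  have hV := fun l : {l : Fin d → ℝ // ∀ i, 0 < l i} => exists_nbhd d hd α h0 h1 l.1 l.2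
  choose V hV1 hV2 using hV
  obtain ⟨s, hs, hcov⟩ := TopologicalSpace.countable_cover_nhds
    (f := fun l : {l : Fin d → ℝ // ∀ i, 0 < l i} => Subtype.val ⁻¹' (V l))
    (fun l => continuous_subtype_val.continuousAt.preimage_mem_nhds (hV1 l))
  haveI : Countable s := hs.to_subtype
  have hdense : Dense (⋂ q : s × ℕ × ℕ × (Σ M : ℕ, (Fin d → Fin M → ℕ)),
      interior (goodSet d α (V q.1) (q.2.1 + 1) q.2.2.1 (tgt d q.2.2.2))) := by
    apply dense_iInter_of_isOpen
    · intro q; exact isOpen_interior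
    · intro q
      exact hV2 q.1 _ _ q.2.2.2.1 _ (Nat.succ_ne_zero _) (fun i m hm => tgt_zero d _ i m hm)
  have hne : ∃ x1 : Fin d → c0C, x1 ≠ 0 := by
    obtain ⟨f, hf⟩ := exists_c0 (fun n => if n = 0 then 1 else 0) 1
      (fun n hn => by rw [if_neg (by omega)])
    refine ⟨fun _ => f, fun h => ?_⟩
    have h2 := congrFun h ⟨0, hd⟩
    have h3 := hf 0
    simp only [Pi.zero_apply] at h2
    rw [h2] at h3
    simp at h3
  obtain ⟨x, hx1, hx2⟩ := hdense.exists_mem_open (isOpen_compl_singleton (x := (0 : Fin d → c0C)))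
    hne
  refine ⟨x, by simpa using (by assumption : x ∈ ({0} : Set (Fin d → c0C))ᶜ), ?_⟩
  intro lam hlam k n hk t
  have hmem : (⟨lam, hlam⟩ : {l : Fin d → ℝ // ∀ i, 0 < l i}) ∈ ⋃ x ∈ s, Subtype.val ⁻¹' (V x) := by
    rw [hcov]; trivial
  simp only [Set.mem_iUnion] at hmem
  obtain ⟨l, hl, hlV⟩ := hmem
  obtain ⟨k, rfl⟩ := Nat.exists_eq_succ_of_ne_zero hk
  have hxG : x ∈ ⋂ q : s × ℕ × ℕ × (Σ M : ℕ, (Fin d → Fin M → ℕ)),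
      interior (goodSet d α (V q.1) (q.2.1 + 1) q.2.2.1 (tgt d q.2.2.2)) := by assumption
  have := interior_subset (Set.mem_iInter.mp hxG ⟨⟨l, hl⟩, k, n, t⟩)
  exact this lam hlV

/-- Example 2.4 of the paper, case `X = c₀(ℕ)`, `w n (λ) = 1 + λ / n^(1-α)`. -/
theorem stmt_12 (d : ℕ) (hd : 1 ≤ d)
    (α : ℝ) (hα0 : 0 < α) (hα1 : α < 1 / (d : ℝ))
    (T : (Fin d → ℝ) → ((Fin d → c0C) →L[ℂ] (Fin d → c0C)))
    (hT : ∀ lam : Fin d → ℝ, (∀ i, 0 < lam i) →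
      IsProductShiftC0 d (fun a n => 1 + a / (n : ℝ) ^ (1 - α)) (T lam) lam) :
    CommonHypercyclicAlgebraCWC0 d {lam | ∀ i, 0 < lam i} T := by
  obtain ⟨x, hx0, hx⟩ := exists_common d hd α hα0 hα1
  refine ⟨{v | ∃ p : Polynomial ℂ, p.coeff 0 = 0 ∧ ∀ i n, v i n = p.eval (x i n)},
    ⟨0, by simp, by simp⟩, ?_, ?_, ?_, ⟨x, ⟨Polynomial.X, by simp, by simp⟩, hx0⟩, ?_⟩
  · rintro v ⟨p, hp, hv⟩ w ⟨q, hq, hw⟩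
    exact ⟨p + q, by simp [hp, hq], fun i n => by simp [hv, hw]⟩
  · rintro c v ⟨p, hp, hv⟩
    exact ⟨Polynomial.C c * p, by simp [hp], fun i n => by simp [hv]⟩
  · rintro v ⟨p, hp, hv⟩ w ⟨q, hq, hw⟩
    exact ⟨fun i => v i * w i, ⟨p * q, by simp [Polynomial.mul_coeff_zero, hp],
      fun i n => by simp [hv, hw]⟩, fun i n => by simp⟩
  · rintro v ⟨p, hp, hv⟩ hv0 lam hlam
    have hpne : p ≠ 0 := by
      rintro rfl
      apply hv0
      funext i
      ext n
      simp [hv]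
    set k := p.natTrailingDegree with hk
    have hk0 : k ≠ 0 := by
      intro h
      have h2 := Polynomial.trailingCoeff_nonzero_iff_nonzero.mpr hpne
      rw [Polynomial.trailingCoeff, ← hk, h] at h2
      exact h2 hp
    set a := p.trailingCoeff with ha
    have ha0 : a ≠ 0 := Polynomial.trailingCoeff_nonzero_iff_nonzero.mpr hpne
    obtain ⟨q, hq⟩ : ∃ q : Polynomial ℂ, p = Polynomial.X ^ k * (Polynomial.C a + Polynomial.X * q) := by
      obtain ⟨q0, hq0⟩ : Polynomial.X ^ k ∣ p := by
        rw [Polynomial.X_pow_dvd_iff]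
        intro j hj
        exact Polynomial.coeff_eq_zero_of_lt_natTrailingDegree hj
      have hc : q0.coeff 0 = a := by
        rw [ha, Polynomial.trailingCoeff, ← hk]
        conv_rhs => rw [hq0]
        simp [Polynomial.coeff_X_pow_mul']
      refine ⟨q0.divX, ?_⟩
      rw [← hc, add_comm, Polynomial.X_mul_divX_add]
      exact hq0
    rw [Metric.dense_iff]
    intro f r hr
    have hna : 0 < ‖a‖ := norm_pos_iff.mpr ha0
    obtain ⟨t, ht⟩ := tgt_approx (fun i => a⁻¹ • f i) (show 0 < r / (8 * ‖a‖) by positivity)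
    obtain ⟨Y, hY0, hY⟩ := exists_bound (tgt d t) t.1 (fun i m hm => tgt_zero d t i m hm)
    have hcont : Continuous (fun s : ℂ => s * q.eval s) := by fun_prop
    have hc0 := hcont.tendsto 0
    rw [zero_mul, Metric.tendsto_nhds_nhds] at hc0
    obtain ⟨δ, hδ0, hδ⟩ := hc0 (r / (8 * (Y + 1))) (by positivity)
    obtain ⟨n0, hn0⟩ := c0_small x hδ0
    obtain ⟨n1, hn1⟩ := exists_nat_one_div_lt (show 0 < r / (8 * ‖a‖) by positivity)
    obtain ⟨N, hN, hNx⟩ := hx lam hlam k (n0 + n1 + 1) hk0 t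
    obtain ⟨N', rfl⟩ : ∃ N', N = N' + 1 := ⟨N - 1, by omega⟩
    refine ⟨_, ?_, ⟨N', rfl⟩⟩
    rw [Metric.mem_ball]
    refine lt_of_le_of_lt ((dist_pi_le_iff (show 0 ≤ r / 2 by positivity)).mpr fun i => ?_)
      (half_lt_self hr)
    refine c0_dist_le (by positivity) fun m => ?_
    rw [iterate_formula (hT lam hlam), hv, hq]
    simp only [Polynomial.eval_mul, Polynomial.eval_pow, Polynomial.eval_X, Polynomial.eval_add,
      Polynomial.eval_C]
    have b1 := hNx i m
    have b2 := ht i m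
    have b3 := hδ (x := x i (m + (N' + 1))) (by rw [dist_zero_right]; exact hn0 i _ (by omega))
    rw [dist_zero_right] at b3
    have b4 := hY i m
    simp only [ZeroAtInftyContinuousMap.smul_apply, smul_eq_mul] at b2
    set P : ℂ := (shPr α (lam i) m (N' + 1) : ℂ)
    set s := x i (m + (N' + 1))
    set y := tgt d t i m
    have hle : 1 / (((n0 + n1 + 1 : ℕ) : ℝ) + 1) ≤ 1 / ((n1 : ℝ) + 1) := by
      apply one_div_le_one_div_of_le (by positivity)
      push_cast
      have : (0:ℝ) ≤ n0 := by positivity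
      linarith
    have hle1 : 1 / (((n0 + n1 + 1 : ℕ) : ℝ) + 1) ≤ 1 := by
      rw [div_le_one (by positivity)]
      have : (0:ℝ) ≤ ((n0 + n1 + 1 : ℕ) : ℝ) := by positivity
      linarith
    have hdec : P * (s ^ k * (a + s * q.eval s)) - f i m =
        a * (P * s ^ k - y) + a * (y - a⁻¹ * f i m) + (P * s ^ k) * (s * q.eval s) := by
      have : f i m = a * (a⁻¹ * f i m) := by field_simp
      conv_lhs => rw [this]
      ring
    rw [hdec]
    have c1 : ‖a * (P * s ^ k - y)‖ ≤ r / 8 := by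
      rw [norm_mul]
      calc _ ≤ ‖a‖ * (r / (8 * ‖a‖)) := by
            apply mul_le_mul_of_nonneg_left _ hna.le
            linarith
        _ = _ := by field_simp
    have c2 : ‖a * (y - a⁻¹ * f i m)‖ ≤ r / 8 := by
      rw [norm_mul]
      calc _ ≤ ‖a‖ * (r / (8 * ‖a‖)) := mul_le_mul_of_nonneg_left b2.le hna.le
        _ = _ := by field_simp
    have c3 : ‖(P * s ^ k) * (s * q.eval s)‖ ≤ r / 8 := by
      rw [norm_mul]
      have : ‖P * s ^ k‖ ≤ Y + 1 := by
        have := norm_add_le (P * s ^ k - y) y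
        rw [sub_add_cancel] at this
        linarith
      calc _ ≤ (Y + 1) * (r / (8 * (Y + 1))) :=
            mul_le_mul this b3.le (norm_nonneg _) (by positivity)
        _ = _ := by field_simp
    have d1 := norm_add_le (a * (P * s ^ k - y) + a * (y - a⁻¹ * f i m)) ((P * s ^ k) * (s * q.eval s))
    have d2 := norm_add_le (a * (P * s ^ k - y)) (a * (y - a⁻¹ * f i m))
    linarith
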